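/- Let p be a prime, n, m, l ≥ 1, R = GR(p^n,m) = (ZMod (p^n))[X]/(f) for a monic basic irreducible f of degree m, ρ ∈ R[X] monic of degree l with reduction modulo (p) irreducible over R/(p), and S = R[X]/(ρ). If γ is a unit of S of multiplicative order p^{ml} − 1, then the element α := γ^{(p^{ml} − 1)/(p^m − 1)} lies in the image of the algebra map R → S, has multiplicative order exactly p^m − 1, and its image in the residue field S/(p) generates multiplicatively the subfield of p^m elements. -/

import Mathlib

/-!
Congruence modulo a nilpotent ideal `J` containing the natural number `q` becomes equality after
raising to the power `q ^ k` for large `k`. On elements of order prime to `q` this power is undone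
by a further one, so reduction modulo `J` preserves their order, and such an element lies in the
image of `φ : R → S` as soon as its residue does. When `q` is the cardinality of a residue field
`k` of `R`, the elements of order `q - 1` in `S ⧸ J` are the generators of the image of `kˣ`.
-/

open Polynomial

section NilpotentIdeal

variable {S : Type*} [CommRing S] {J : Ideal S} {q : ℕ}

theorem pow_pow_sub_pow_pow_mem (hq : (q : S) ∈ J) {x y : S} (h : x - y ∈ J) (k : ℕ) :
    x ^ q ^ k - y ^ q ^ k ∈ J ^ (k + 1) := by
  induction k with
  | zero => simpa using h
  | succ k ih =>
    have hgeom : ∑ i ∈ Finset.range q, (x ^ q ^ k) ^ i * (y ^ q ^ k) ^ (q - 1 - i) ∈ J := by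
      rw [← Ideal.Quotient.mk_eq_mk_iff_sub_mem] at h
      rw [← Ideal.Quotient.eq_zero_iff_mem] at hq ⊢
      rw [RingHom.map_geom_sum₂, map_pow, map_pow, h, geom_sum₂_self, ← map_natCast
        (Ideal.Quotient.mk J), hq, zero_mul]
    rw [pow_succ q k, pow_mul, pow_mul, ← geom_sum₂_mul, pow_succ']
    exact Ideal.mul_mem_mul hgeom ih

theorem exists_forall_pow_pow_eq_of_sub_mem (hJ : IsNilpotent J) (hq : (q : S) ∈ J) :
    ∃ k, ∀ x y : S, x - y ∈ J → x ^ q ^ k = y ^ q ^ k := by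
  obtain ⟨k, hk⟩ := hJ
  refine ⟨k, fun x y h ↦ sub_eq_zero.mp ?_⟩
  simpa [pow_succ, hk] using pow_pow_sub_pow_pow_mem hq h k

theorem orderOf_quotientMk_of_coprime (hJ : IsNilpotent J) (hq : (q : S) ∈ J) {a : S}
    (ha : q.Coprime (orderOf a)) : orderOf (Ideal.Quotient.mk J a) = orderOf a := by
  obtain ⟨k, hk⟩ := exists_forall_pow_pow_eq_of_sub_mem hJ hq
  refine Nat.dvd_antisymm (orderOf_map_dvd (Ideal.Quotient.mk J : S →* S ⧸ J) a) ?_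
  have hmem : a ^ orderOf (Ideal.Quotient.mk J a) - 1 ∈ J := by
    rw [← Ideal.Quotient.mk_eq_mk_iff_sub_mem, map_pow, pow_orderOf_eq_one, map_one]
  have hpow : a ^ (orderOf (Ideal.Quotient.mk J a) * q ^ k) = 1 := by
    rw [pow_mul, hk _ _ hmem, one_pow]
  exact (ha.symm.pow_right k).dvd_of_dvd_mul_right (orderOf_dvd_of_pow_eq_one hpow)

theorem mem_range_of_quotientMk_mem_range {R : Type*} [CommRing R] (φ : R →+* S)
    (hJ : IsNilpotent J) (hq : (q : S) ∈ J) {a : S} (ha : q.Coprime (orderOf a))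
    (hmem : Ideal.Quotient.mk J a ∈ ((Ideal.Quotient.mk J).comp φ).range) : a ∈ φ.range := by
  obtain ⟨k, hk⟩ := exists_forall_pow_pow_eq_of_sub_mem hJ hq
  obtain ⟨r, hr⟩ := hmem
  have hpow : φ r ^ q ^ k = a ^ q ^ k := hk _ _ (Ideal.Quotient.eq.mp hr)
  obtain ⟨j, hj⟩ := exists_pow_eq_self_of_coprime (ha.pow_left k)
  exact ⟨(r ^ q ^ k) ^ j, by rw [map_pow, map_pow, hpow, hj]⟩

end NilpotentIdeal

section FiniteField

variable {k K : Type*} [Field k] [Finite k] [CommRing K] [IsDomain K] (g : k →+* K) {a : K}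

theorem mem_range_of_orderOf_eq_natCard_sub_one (ha : orderOf a = Nat.card k - 1) :
    a ∈ g.range := by
  obtain ⟨u, hu⟩ := IsCyclic.exists_ofOrder_eq_natCard (α := kˣ)
  have hgu : orderOf (g u) = orderOf a := by
    rw [ha, ← Nat.card_units, ← hu, ← orderOf_units]
    exact orderOf_injective (g : k →* K) g.injective _
  have : NeZero (orderOf (g u)) := ⟨by
    rw [hgu, ha, ← Nat.card_units]; exact Nat.card_pos.ne'⟩
  obtain ⟨i, -, hi⟩ := (IsPrimitiveRoot.orderOf (g u)).eq_pow_of_pow_eq_one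
    (hgu ▸ pow_orderOf_eq_one a)
  exact ⟨(u : k) ^ i, by rw [map_pow, hi]⟩

theorem coe_range_eq_zero_union_range_pow (ha : orderOf a = Nat.card k - 1) :
    (g.range : Set K) = {0} ∪ Set.range (a ^ · : ℕ → K) := by
  have : NeZero (orderOf a) := ⟨by rw [ha, ← Nat.card_units]; exact Nat.card_pos.ne'⟩
  refine Set.Subset.antisymm ?_ (Set.union_subset (by simp) ?_)
  · rintro _ ⟨x, rfl⟩
    obtain rfl | hx := eq_or_ne x 0
    · simp
    have hpow : g x ^ orderOf a = 1 := by
      have := Fintype.ofFinite k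
      rw [ha, ← map_pow, Nat.card_eq_fintype_card, FiniteField.pow_card_sub_one_eq_one x hx,
        map_one]
    obtain ⟨i, -, hi⟩ := (IsPrimitiveRoot.orderOf a).eq_pow_of_pow_eq_one hpow
    exact Or.inr ⟨i, hi⟩
  · rintro _ ⟨i, rfl⟩
    exact pow_mem (mem_range_of_orderOf_eq_natCard_sub_one g ha) i

end FiniteField

theorem map_span_natCast {A B : Type*} [CommRing A] [CommRing B] (φ : A →+* B) (p : ℕ) :
    (Ideal.span {(p : A)}).map φ = Ideal.span {(p : B)} := by
  rw [Ideal.map_span, Set.image_singleton, map_natCast]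

section AdjoinRoot

variable {A : Type*} [CommRing A] {I : Ideal A} {g : A[X]}

theorem irreducible_map_quotientMk_iff_of_ker_eq {B : Type*} [CommRing B]
    {c : A →+* B} (hc : Function.Surjective c) (hI : RingHom.ker c = I) :
    Irreducible (g.map (Ideal.Quotient.mk I)) ↔ Irreducible (g.map c) := by
  subst hI
  rw [← MulEquiv.irreducible_iff (Polynomial.mapEquiv (RingHom.quotientKerEquivOfSurjective hc)),
    Polynomial.mapEquiv_apply, Polynomial.map_map]
  rfl

theorem isMaximal_map_adjoinRoot_of [I.IsMaximal]
    (hirr : Irreducible (g.map (Ideal.Quotient.mk I))) :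
    (I.map (AdjoinRoot.of g)).IsMaximal := by
  let : Field (A ⧸ I) := Ideal.Quotient.field I
  have : (Ideal.span {g.map (Ideal.Quotient.mk I)}).IsMaximal :=
    PrincipalIdealRing.isMaximal_of_irreducible hirr
  exact Ideal.Quotient.maximal_of_isField _ <|
    (AdjoinRoot.quotEquivQuotMap g I).toMulEquiv.isField
      ((Ideal.Quotient.maximal_ideal_iff_isField_quotient _).mp this)

theorem isMaximal_span_natCast_adjoinRoot {p : ℕ} [(Ideal.span {(p : A)}).IsMaximal]
    (hirr : Irreducible (g.map (Ideal.Quotient.mk (Ideal.span {(p : A)})))) :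
    (Ideal.span {(p : AdjoinRoot g)}).IsMaximal :=
  map_span_natCast (AdjoinRoot.of g) p ▸ isMaximal_map_adjoinRoot_of hirr

theorem natCard_adjoinRoot_quotient_map_of [Nontrivial (A ⧸ I)] (hg : g.Monic) :
    Nat.card (AdjoinRoot g ⧸ I.map (AdjoinRoot.of g)) = Nat.card (A ⧸ I) ^ g.natDegree := by
  have hg' : (g.map (Ideal.Quotient.mk I)).Monic := hg.map _
  calc
    _ = Nat.card (AdjoinRoot (g.map (Ideal.Quotient.mk I))) :=
      Nat.card_congr (AdjoinRoot.quotEquivQuotMap g I).toEquiv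
    _ = Nat.card (Fin (AdjoinRoot.powerBasis' hg').dim → A ⧸ I) :=
      Nat.card_congr (AdjoinRoot.powerBasis' hg').basis.equivFun.toEquiv
    _ = Nat.card (A ⧸ I) ^ g.natDegree := by
      rw [Nat.card_fun, Nat.card_fin, AdjoinRoot.powerBasis'_dim, hg.natDegree_map]

end AdjoinRoot

section ZMod

theorem ker_zmodCastHom {m n : ℕ} (h : m ∣ n) :
    RingHom.ker (ZMod.castHom h (ZMod m)) = Ideal.span {(m : ZMod n)} := by
  refine le_antisymm (fun x hx ↦ ?_) (by simp [RingHom.mem_ker])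
  obtain ⟨a, rfl⟩ := ZMod.intCast_surjective x
  rw [RingHom.mem_ker, map_intCast, ZMod.intCast_zmod_eq_zero_iff_dvd] at hx
  exact Ideal.mem_span_singleton.mpr (by exact_mod_cast Int.cast_dvd_cast (α := ZMod n) _ _ hx)

theorem isMaximal_span_natCast_zmod {p n : ℕ} [Fact p.Prime] (h : p ∣ n) :
    (Ideal.span {(p : ZMod n)}).IsMaximal := by
  rw [← ker_zmodCastHom h]
  exact RingHom.ker_isMaximal_of_surjective _ (ZMod.castHom_surjective h)

theorem natCard_zmod_quotient_span_natCast {m n : ℕ} (h : m ∣ n) :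
    Nat.card (ZMod n ⧸ Ideal.span {(m : ZMod n)}) = m := by
  rw [← ker_zmodCastHom h, Nat.card_congr
    (RingHom.quotientKerEquivOfSurjective (ZMod.castHom_surjective h)).toEquiv, Nat.card_zmod]

theorem isMaximal_span_natCast_adjoinRoot_zmod {p n : ℕ} [Fact p.Prime] (h : p ∣ n)
    {f : (ZMod n)[X]} (hirr : Irreducible (f.map (ZMod.castHom h (ZMod p)))) :
    (Ideal.span {(p : AdjoinRoot f)}).IsMaximal :=
  have := isMaximal_span_natCast_zmod h
  isMaximal_span_natCast_adjoinRoot <|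
    (irreducible_map_quotientMk_iff_of_ker_eq (ZMod.castHom_surjective h) (ker_zmodCastHom h)).mpr
      hirr

theorem natCard_adjoinRoot_zmod_quotient_span_natCast {p n : ℕ} [Fact p.Prime] (h : p ∣ n)
    {f : (ZMod n)[X]} (hf : f.Monic) :
    Nat.card (AdjoinRoot f ⧸ Ideal.span {(p : AdjoinRoot f)}) = p ^ f.natDegree := by
  have := isMaximal_span_natCast_zmod h
  rw [← map_span_natCast (AdjoinRoot.of f) p, natCard_adjoinRoot_quotient_map_of hf,
    natCard_zmod_quotient_span_natCast h]

theorem isNilpotent_span_natCast {A : Type*} [CommRing A] {p n : ℕ} (φ : ZMod (p ^ n) →+* A) :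
    IsNilpotent (Ideal.span {(p : A)}) := by
  refine ⟨n, ?_⟩
  rw [Ideal.span_singleton_pow, Ideal.zero_eq_bot, Ideal.span_singleton_eq_bot, ← Nat.cast_pow,
    ← map_natCast φ, ZMod.natCast_self, map_zero]

end ZMod

theorem galois_ring_subring_teichmuller_generator_general {R S : Type*} [CommRing R] [CommRing S]
    (φ : R →+* S) (I : Ideal R) [I.IsMaximal] (J : Ideal S) [J.IsPrime] (hIJ : I ≤ J.comap φ)
    (hJ : IsNilpotent J) {q N : ℕ} (hq : q ≠ 0) (hcard : Nat.card (R ⧸ I) = q) (hN : N ≠ 0)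
    (hdvd : q - 1 ∣ N) (γ : Sˣ) (hγ : orderOf γ = N) :
    ((γ ^ (N / (q - 1)) : Sˣ) : S) ∈ Set.range φ ∧
    orderOf (γ ^ (N / (q - 1))) = q - 1 ∧
    ∃ F : Subring (S ⧸ J),
      (F : Set (S ⧸ J)) = {0} ∪ Set.range (fun i : ℕ =>
        (Ideal.Quotient.mk J ((γ ^ (N / (q - 1)) : Sˣ) : S)) ^ i) ∧
      Nat.card F = q := by
  subst hcard hγ
  let : Field (R ⧸ I) := Ideal.Quotient.field I
  have : Finite (R ⧸ I) := Nat.finite_of_card_ne_zero hq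
  set q := Nat.card (R ⧸ I) with hq_def
  set α := γ ^ (orderOf γ / (q - 1))
  let g : R ⧸ I →+* S ⧸ J := Ideal.quotientMap J φ hIJ
  have hα : orderOf α = q - 1 := orderOf_pow_orderOf_div hN hdvd
  have hqJ : (q : S) ∈ J := by
    have := Fintype.ofFinite (R ⧸ I)
    rw [← Ideal.Quotient.eq_zero_iff_mem, map_natCast, ← map_natCast g, hq_def,
      Nat.card_eq_fintype_card, FiniteField.cast_card_eq_zero, map_zero]
  have hcop : q.Coprime (orderOf (α : S)) := by
    rw [orderOf_units, hα, Nat.coprime_self_sub_right Finite.one_lt_card.le]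
    exact Nat.coprime_one_right q
  have hord : orderOf (Ideal.Quotient.mk J (α : S)) = q - 1 := by
    rw [orderOf_quotientMk_of_coprime hJ hqJ hcop, orderOf_units, hα]
  refine ⟨mem_range_of_quotientMk_mem_range φ hJ hqJ hcop ?_, hα, g.range,
    coe_range_eq_zero_union_range_pow g hord, Nat.card_range_of_injective g.injective⟩
  obtain ⟨x, hx⟩ := mem_range_of_orderOf_eq_natCard_sub_one g hord
  obtain ⟨r, rfl⟩ := Ideal.Quotient.mk_surjective x
  exact ⟨r, hx⟩

/-- Let `R = GR(p^n, m)` and `S = R[X]/(ρ) = GR(p^n, m*l)`. If `γ` is a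
unit of `S` of multiplicative order `p^(m*l) - 1`, then `α := γ ^ ((p^(m*l)-1)/(p^m-1))`
lies in the image of `R → S`, has multiplicative order exactly `p^m - 1`, and its image in
the residue field `S/(p)` generates multiplicatively the subfield with `p^m` elements. -/
theorem galois_ring_subring_teichmuller_generator (p n m l : ℕ) (hp : p.Prime)
    (hn : 0 < n) (hm : 0 < m) (hl : 0 < l)
    (f : Polynomial (ZMod (p ^ n))) (hf : f.Monic) (hdeg : f.natDegree = m)
    (hirr : Irreducible (f.map (ZMod.castHom (dvd_pow_self p hn.ne') (ZMod p))))
    (ρ : Polynomial (AdjoinRoot f)) (hρ : ρ.Monic) (hρdeg : ρ.natDegree = l)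
    (hρirr : Irreducible
      (ρ.map (Ideal.Quotient.mk (Ideal.span {(p : AdjoinRoot f)}))))
    (γ : (AdjoinRoot ρ)ˣ) (hγ : orderOf γ = p ^ (m * l) - 1) :
    ((γ ^ ((p ^ (m * l) - 1) / (p ^ m - 1)) : (AdjoinRoot ρ)ˣ) : AdjoinRoot ρ) ∈
        Set.range (algebraMap (AdjoinRoot f) (AdjoinRoot ρ)) ∧
    orderOf (γ ^ ((p ^ (m * l) - 1) / (p ^ m - 1))) = p ^ m - 1 ∧
    ∃ F : Subring (AdjoinRoot ρ ⧸ Ideal.span {(p : AdjoinRoot ρ)}),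
      (F : Set (AdjoinRoot ρ ⧸ Ideal.span {(p : AdjoinRoot ρ)})) =
        {0} ∪ Set.range (fun i : ℕ =>
          (Ideal.Quotient.mk (Ideal.span {(p : AdjoinRoot ρ)})
            ((γ ^ ((p ^ (m * l) - 1) / (p ^ m - 1)) : (AdjoinRoot ρ)ˣ) : AdjoinRoot ρ)) ^ i) ∧
      Nat.card F = p ^ m := by
  have : Fact p.Prime := ⟨hp⟩
  have hpn : p ∣ p ^ n := dvd_pow_self p hn.ne'
  have := isMaximal_span_natCast_adjoinRoot_zmod hpn hirr
  have := isMaximal_span_natCast_adjoinRoot hρirr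
  have hcard : Nat.card (AdjoinRoot f ⧸ Ideal.span {(p : AdjoinRoot f)}) = p ^ m :=
    hdeg ▸ natCard_adjoinRoot_zmod_quotient_span_natCast hpn hf
  have hlt : 1 < p ^ (m * l) := Nat.one_lt_pow (Nat.mul_pos hm hl).ne' hp.one_lt
  exact galois_ring_subring_teichmuller_generator_general (algebraMap _ _) _ _
    (Ideal.map_le_iff_le_comap.mp (map_span_natCast _ p).le)
    (isNilpotent_span_natCast ((AdjoinRoot.of ρ).comp (AdjoinRoot.of f)))
    (pow_ne_zero m hp.ne_zero) hcard (Nat.sub_pos_of_lt hlt).ne'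
    (Nat.pow_sub_one_dvd_pow_sub_one p (dvd_mul_right m l)) γ hγ
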